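/- There do not exist positive integers k and q with q ≥ 3 such that 5 divides k, k divides q² + 1, and k² − 4k + 11 = 4q². -/

import Mathlib

/-- There are no positive integers `k, q` with `q ≥ 3` such that `5 ∣ k`,
`k ∣ q² + 1` and `k² − 4k + 11 = 4q²`. -/
theorem stmt_12 :
    ¬ ∃ k q : ℤ, 0 < k ∧ 3 ≤ q ∧ 5 ∣ k ∧ k ∣ q ^ 2 + 1 ∧
      k ^ 2 - 4 * k + 11 = 4 * q ^ 2 := by
  rintro ⟨k, q, hk, hq, -, -, h⟩
  -- The equation reads `(k - 2)² + 7 = (2q)²`, but every smaller square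
  -- differs from `(2q)²` by at least `4q - 1 ≥ 11`.
  have hlt : k - 2 < 2 * q := by nlinarith
  nlinarith [mul_nonneg (show 0 ≤ 2 * q - 1 - (k - 2) by omega)
    (show 0 ≤ 2 * q - 1 + (k - 2) by omega)]
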